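/- Let ρ > 0, let ψ : ℝ^d → ℝ be differentiable and ρ-strongly convex, let L ≥ 0, let g : ℝ^d → ℝ be L-Lipschitz, let f : ℝ^d → ℝ be measurable with 0 < ∫_{ℝ^d} e^{−(f+g)(x)} dx < ∞, and let λ > 0. Let π be the probability measure with Lebesgue density proportional to e^{−(f+g)} and let π_λ^ψ be the probability measure with Lebesgue density proportional to e^{−(f + env_{λ,g}^ψ)}, where env_{λ,g}^ψ denotes either the left or the right Bregman–Moreau envelope of g. Then ‖π_λ^ψ − π‖_TV ≤ λ·L²/ρ. -/

import Mathlib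

open scoped RealInnerProductSpace ENNReal
open MeasureTheory

/-- The Bregman divergence associated with a differentiable function `ψ`. -/
noncomputable def bregmanDiv {d : ℕ} (ψ : EuclideanSpace ℝ (Fin d) → ℝ)
    (x y : EuclideanSpace ℝ (Fin d)) : ℝ :=
  ψ x - ψ y - ⟪gradient ψ y, x - y⟫

/-- The left Bregman–Moreau envelope of `g` associated with `ψ`. -/
noncomputable def leftEnv {d : ℕ} (ψ g : EuclideanSpace ℝ (Fin d) → ℝ) (lam : ℝ)
    (x : EuclideanSpace ℝ (Fin d)) : ℝ :=
  ⨅ y : EuclideanSpace ℝ (Fin d), (g y + (1 / lam) * bregmanDiv ψ y x)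

/-- The right Bregman–Moreau envelope of `g` associated with `ψ`. -/
noncomputable def rightEnv {d : ℕ} (ψ g : EuclideanSpace ℝ (Fin d) → ℝ) (lam : ℝ)
    (x : EuclideanSpace ℝ (Fin d)) : ℝ :=
  ⨅ y : EuclideanSpace ℝ (Fin d), (g y + (1 / lam) * bregmanDiv ψ x y)

/-- The total variation distance `sup_{A Borel} |μ(A) − ν(A)|`. -/
noncomputable def tvDist {α : Type*} [MeasurableSpace α] (μ ν : Measure α) : ℝ :=
  ⨆ A : {A : Set α // MeasurableSet A}, |(μ A.1).toReal - (ν A.1).toReal|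

/-!
Young's inequality `L r ≤ λ L² / (2ρ) + ρ r² / (2λ)` shows that the envelope lies between
`g - λ L² / (2ρ)` and `g`, so the two potentials differ by a function of oscillation at most
`c = λ L² / (2ρ)`. Comparing the two Gibbs weights at `x` and `y` simultaneously and integrating in
`y` cancels the normalizing constants: one normalized density is at least `exp (-c)` times the
other. Such a minorization bounds the total variation distance by `1 - exp (-c) ≤ c`, which is half
of the claimed bound.
-/

open scoped NNReal

section TotalVariation

variable {α : Type*} [MeasurableSpace α] {μ ν : Measure α}

lemma tvDist_le_of_measureReal_sub_le [IsProbabilityMeasure μ] [IsProbabilityMeasure ν] {c : ℝ}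
    (h : ∀ A, MeasurableSet A → ν.real A - μ.real A ≤ c) : tvDist μ ν ≤ c := by
  have : Nonempty {A : Set α // MeasurableSet A} := ⟨⟨∅, MeasurableSet.empty⟩⟩
  refine ciSup_le fun ⟨A, hA⟩ => abs_sub_le_iff.2 ⟨?_, h A hA⟩
  have hAc := h Aᶜ hA.compl
  rwa [probReal_compl_eq_one_sub hA, probReal_compl_eq_one_sub hA, sub_sub_sub_cancel_left] at hAc

lemma tvDist_le_one_sub_of_smul_le [IsProbabilityMeasure μ] [IsProbabilityMeasure ν] {a : ℝ≥0}
    (h : a • ν ≤ μ) : tvDist μ ν ≤ 1 - a := by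
  have hreal (A : Set α) : a * ν.real A ≤ μ.real A := by
    rw [← measureReal_nnreal_smul_apply]
    exact ENNReal.toReal_mono (measure_ne_top μ A) (h A)
  have ha : (a : ℝ) ≤ 1 := by simpa only [probReal_univ, mul_one] using hreal Set.univ
  refine tvDist_le_of_measureReal_sub_le fun A _ => ?_
  calc ν.real A - μ.real A ≤ ν.real A - a * ν.real A := by gcongr; exact hreal A
    _ = (1 - a) * ν.real A := by ring
    _ ≤ 1 - a := mul_le_of_le_one_right (sub_nonneg.2 ha) measureReal_le_one

end TotalVariation

section Gibbs

variable {α : Type*} [MeasurableSpace α]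

/-- The partition function `∫ exp (-U) dm` of the potential `U` with respect to the reference
measure `m`: the normalizing constant of the Gibbs measure. It is encoded as a lower integral, so
that `U` need be neither measurable nor integrable. -/
noncomputable def partitionFunction (m : Measure α) (U : α → ℝ) : ℝ≥0∞ :=
  ∫⁻ x, ENNReal.ofReal (Real.exp (-U x)) ∂m

/-- The Gibbs measure with potential `U` and reference measure `m`, whose density is `exp (-U)`
divided by the partition function. It is a probability measure only if the partition function is
neither `0` nor `∞`. -/
noncomputable def gibbsMeasure (m : Measure α) (U : α → ℝ) : Measure α :=
  m.withDensity fun x => ENNReal.ofReal (Real.exp (-U x)) / partitionFunction m U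

variable {m : Measure α} {U V : α → ℝ} {c : ℝ}

lemma isProbabilityMeasure_gibbsMeasure (h0 : partitionFunction m U ≠ 0)
    (htop : partitionFunction m U ≠ ∞) : IsProbabilityMeasure (gibbsMeasure m U) := by
  constructor
  simp only [gibbsMeasure, withDensity_apply _ MeasurableSet.univ, Measure.restrict_univ,
    div_eq_mul_inv]
  rw [lintegral_mul_const' _ _ (ENNReal.inv_ne_top.2 h0)]
  exact ENNReal.mul_inv_cancel h0 htop

lemma partitionFunction_le_exp_mul (h : ∀ x, U x ≤ V x + c) :
    partitionFunction m V ≤ ENNReal.ofReal (Real.exp c) * partitionFunction m U := by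
  rw [partitionFunction, partitionFunction, ← lintegral_const_mul' _ _ ENNReal.ofReal_ne_top]
  refine lintegral_mono fun x => ?_
  rw [← ENNReal.ofReal_mul (Real.exp_nonneg _), ← Real.exp_add]
  gcongr
  linarith [h x]

lemma partitionFunction_ne_top_of_le_add (h : ∀ x, U x ≤ V x + c)
    (htop : partitionFunction m U ≠ ∞) : partitionFunction m V ≠ ∞ :=
  ne_top_of_le_ne_top (ENNReal.mul_ne_top ENNReal.ofReal_ne_top htop)
    (partitionFunction_le_exp_mul h)

lemma partitionFunction_ne_zero_of_le_add (h : ∀ x, V x ≤ U x + c)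
    (h0 : partitionFunction m U ≠ 0) : partitionFunction m V ≠ 0 := fun hV =>
  h0 (le_zero_iff.1 ((partitionFunction_le_exp_mul h).trans_eq (by rw [hV, mul_zero])))

lemma nonempty_of_partitionFunction_ne_zero (h0 : partitionFunction m U ≠ 0) : Nonempty α := by
  by_contra hα
  rw [not_nonempty_iff] at hα
  exact h0 (lintegral_of_isEmpty m _)

lemma exp_neg_mul_gibbs_density_le (h : ∀ x y, V x + U y ≤ U x + V y + c)
    (hV0 : partitionFunction m V ≠ 0) (hVtop : partitionFunction m V ≠ ∞) (x : α) :
    ENNReal.ofReal (Real.exp (-c)) *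
        (ENNReal.ofReal (Real.exp (-U x)) / partitionFunction m U) ≤
      ENNReal.ofReal (Real.exp (-V x)) / partitionFunction m V := by
  have hcross : partitionFunction m V ≤
      ENNReal.ofReal (Real.exp (U x - V x + c)) * partitionFunction m U :=
    partitionFunction_le_exp_mul fun y => by linarith [h x y]
  rw [ENNReal.le_div_iff_mul_le (Or.inl hV0) (Or.inl hVtop), ← mul_div_assoc,
    ENNReal.mul_comm_div]
  calc _ ≤ ENNReal.ofReal (Real.exp (-c)) * ENNReal.ofReal (Real.exp (-U x)) *
        ENNReal.ofReal (Real.exp (U x - V x + c)) := by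
        gcongr
        exact ENNReal.div_le_of_le_mul hcross
    _ = ENNReal.ofReal (Real.exp (-V x)) := by
        simp only [← ENNReal.ofReal_mul, Real.exp_nonneg, ← Real.exp_add]
        ring_nf

theorem tvDist_gibbsMeasure_le (h : ∀ x y, V x + U y ≤ U x + V y + c)
    (h0 : partitionFunction m U ≠ 0) (htop : partitionFunction m U ≠ ∞) :
    tvDist (gibbsMeasure m V) (gibbsMeasure m U) ≤ 1 - Real.exp (-c) := by
  obtain ⟨a⟩ := nonempty_of_partitionFunction_ne_zero h0
  have hV0 : partitionFunction m V ≠ 0 :=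
    partitionFunction_ne_zero_of_le_add (c := V a - U a + c) (fun x => by linarith [h x a]) h0
  have hVtop : partitionFunction m V ≠ ∞ :=
    partitionFunction_ne_top_of_le_add (c := U a - V a + c) (fun x => by linarith [h a x]) htop
  have := isProbabilityMeasure_gibbsMeasure h0 htop
  have := isProbabilityMeasure_gibbsMeasure hV0 hVtop
  have hsmul : (Real.exp (-c)).toNNReal • gibbsMeasure m U ≤ gibbsMeasure m V := by
    change ENNReal.ofReal (Real.exp (-c)) • gibbsMeasure m U ≤ gibbsMeasure m V
    rw [gibbsMeasure, ← withDensity_smul' _ _ ENNReal.ofReal_ne_top]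
    exact withDensity_mono (ae_of_all _ (exp_neg_mul_gibbs_density_le h hV0 hVtop))
  simpa only [Real.coe_toNNReal _ (Real.exp_nonneg _)] using tvDist_le_one_sub_of_smul_le hsmul

end Gibbs

section MoreauEnvelope

/-- The Moreau envelope of `g` with step `lam` for an arbitrary cost `D`. The right Bregman–Moreau
envelope is the case `D = bregmanDiv ψ`, the left one that of the transposed cost. The infimum has
the junk value `0` where the objective is unbounded below. -/
noncomputable def moreauEnv {E : Type*} (D : E → E → ℝ) (g : E → ℝ) (lam : ℝ) (x : E) : ℝ :=
  ⨅ y, (g y + (1 / lam) * D x y)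

variable {E : Type*} [PseudoMetricSpace E] {D : E → E → ℝ} {f g : E → ℝ} {K : ℝ≥0} {ρ lam : ℝ}

lemma mul_le_add_sq_div (hρ : 0 < ρ) (hlam : 0 < lam) (L r : ℝ) :
    L * r ≤ lam * L ^ 2 / (2 * ρ) + (1 / lam) * (ρ / 2 * r ^ 2) := by
  have hsq : lam * L ^ 2 / (2 * ρ) + (1 / lam) * (ρ / 2 * r ^ 2) - L * r =
      (lam * L - ρ * r) ^ 2 / (2 * lam * ρ) := by
    field_simp
    ring
  have hnonneg : 0 ≤ (lam * L - ρ * r) ^ 2 / (2 * lam * ρ) := by positivity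
  linarith

lemma sub_le_add_cost_of_lipschitzWith {x y : E} (hρ : 0 < ρ) (hlam : 0 < lam)
    (hg : LipschitzWith K g) (hD : ρ / 2 * dist x y ^ 2 ≤ D x y) :
    g x - lam * K ^ 2 / (2 * ρ) ≤ g y + (1 / lam) * D x y := by
  rw [sub_le_iff_le_add]
  calc g x ≤ g y + K * dist x y := hg.le_add_mul x y
    _ ≤ g y + (lam * K ^ 2 / (2 * ρ) + (1 / lam) * (ρ / 2 * dist x y ^ 2)) := by
        gcongr
        exact mul_le_add_sq_div hρ hlam K (dist x y)
    _ ≤ g y + (lam * K ^ 2 / (2 * ρ) + (1 / lam) * D x y) := by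
        gcongr
    _ = g y + (1 / lam) * D x y + lam * K ^ 2 / (2 * ρ) := by ring

lemma sub_le_moreauEnv {x : E} (hρ : 0 < ρ) (hlam : 0 < lam)
    (hg : LipschitzWith K g) (hD : ∀ y, ρ / 2 * dist x y ^ 2 ≤ D x y) :
    g x - lam * K ^ 2 / (2 * ρ) ≤ moreauEnv D g lam x :=
  have : Nonempty E := ⟨x⟩
  le_ciInf fun y => sub_le_add_cost_of_lipschitzWith hρ hlam hg (hD y)

lemma moreauEnv_le {x : E} (hρ : 0 < ρ) (hlam : 0 < lam)
    (hg : LipschitzWith K g) (hD : ∀ y, ρ / 2 * dist x y ^ 2 ≤ D x y) (hx : D x x = 0) :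
    moreauEnv D g lam x ≤ g x := by
  have hbdd : BddBelow (Set.range fun y => g y + (1 / lam) * D x y) :=
    ⟨_, Set.forall_mem_range.2 fun y => sub_le_add_cost_of_lipschitzWith hρ hlam hg (hD y)⟩
  exact (ciInf_le hbdd x).trans_eq (by rw [hx, mul_zero, add_zero])

theorem stmt6_general [MeasurableSpace E] {m : Measure E} (hρ : 0 < ρ) (hlam : 0 < lam)
    (hD_self : ∀ x, D x x = 0) (hD : ∀ x y, ρ / 2 * dist x y ^ 2 ≤ D x y)
    (hg : LipschitzWith K g) (h0 : partitionFunction m (fun x => f x + g x) ≠ 0)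
    (htop : partitionFunction m (fun x => f x + g x) ≠ ∞) :
    tvDist (gibbsMeasure m fun x => f x + moreauEnv D g lam x)
      (gibbsMeasure m fun x => f x + g x) ≤ lam * K ^ 2 / (2 * ρ) := by
  refine (tvDist_gibbsMeasure_le (c := lam * K ^ 2 / (2 * ρ)) (fun x y => ?_) h0 htop).trans
    (sub_le_comm.1 (Real.one_sub_le_exp_neg _))
  linarith [moreauEnv_le hρ hlam hg (hD x) (hD_self x), sub_le_moreauEnv hρ hlam hg (hD y)]

end MoreauEnvelope

section Bregman

variable {d : ℕ} {ψ g env : EuclideanSpace ℝ (Fin d) → ℝ} {ρ lam : ℝ}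

lemma bregmanDiv_self (x : EuclideanSpace ℝ (Fin d)) : bregmanDiv ψ x x = 0 := by
  simp [bregmanDiv]

lemma mul_dist_sq_le_bregmanDiv {x y : EuclideanSpace ℝ (Fin d)}
    (h : ψ y + ⟪gradient ψ y, x - y⟫ + ρ / 2 * ‖x - y‖ ^ 2 ≤ ψ x) :
    ρ / 2 * dist x y ^ 2 ≤ bregmanDiv ψ x y := by
  rw [dist_eq_norm, bregmanDiv]
  linarith

lemma exists_env_eq_moreauEnv
    (hsc : ∀ x y, ψ y + ⟪gradient ψ y, x - y⟫ + ρ / 2 * ‖x - y‖ ^ 2 ≤ ψ x)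
    (henv : env = leftEnv ψ g lam ∨ env = rightEnv ψ g lam) :
    ∃ D : EuclideanSpace ℝ (Fin d) → EuclideanSpace ℝ (Fin d) → ℝ, (∀ x, D x x = 0) ∧
      (∀ x y, ρ / 2 * dist x y ^ 2 ≤ D x y) ∧ env = moreauEnv D g lam := by
  have hD (x y) : ρ / 2 * dist x y ^ 2 ≤ bregmanDiv ψ x y := mul_dist_sq_le_bregmanDiv (hsc x y)
  rcases henv with hleft | hright
  · exact ⟨fun x y => bregmanDiv ψ y x, bregmanDiv_self, fun x y => dist_comm x y ▸ hD y x, hleft⟩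
  · exact ⟨bregmanDiv ψ, bregmanDiv_self, hD, hright⟩

end Bregman

/-- With `ψ` `ρ`-strongly convex and `g` `L`-Lipschitz, the Gibbs measures for the
potentials `f + g` and `f + env_{λ,g}^ψ` satisfy `‖π_λ^ψ − π‖_TV ≤ λ L² / ρ`. -/
theorem stmt6 {d : ℕ} (ρ : ℝ) (hρ : 0 < ρ)
    (ψ : EuclideanSpace ℝ (Fin d) → ℝ)
    (hdiff : Differentiable ℝ ψ)
    (hsc : ∀ y ytil : EuclideanSpace ℝ (Fin d),
      ψ ytil + ⟪gradient ψ ytil, y - ytil⟫ + ρ / 2 * ‖y - ytil‖ ^ 2 ≤ ψ y)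
    (L : ℝ) (hL : 0 ≤ L)
    (g : EuclideanSpace ℝ (Fin d) → ℝ)
    (hg : ∀ x y, |g x - g y| ≤ L * ‖x - y‖)
    (f : EuclideanSpace ℝ (Fin d) → ℝ) (hf : Measurable f)
    (hpos : 0 < ∫⁻ x, ENNReal.ofReal (Real.exp (-(f x + g x))))
    (hfin : (∫⁻ x, ENNReal.ofReal (Real.exp (-(f x + g x)))) < ∞)
    (lam : ℝ) (hlam : 0 < lam)
    (env : EuclideanSpace ℝ (Fin d) → ℝ)
    (henv : env = leftEnv ψ g lam ∨ env = rightEnv ψ g lam)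
    (π πlam : Measure (EuclideanSpace ℝ (Fin d)))
    (hπ : π = volume.withDensity fun x =>
      ENNReal.ofReal (Real.exp (-(f x + g x))) /
        ∫⁻ y, ENNReal.ofReal (Real.exp (-(f y + g y))))
    (hπlam : πlam = volume.withDensity fun x =>
      ENNReal.ofReal (Real.exp (-(f x + env x))) /
        ∫⁻ y, ENNReal.ofReal (Real.exp (-(f y + env y)))) :
    tvDist πlam π ≤ lam * L ^ 2 / ρ := by
  obtain ⟨D, hD_self, hD, rfl⟩ := exists_env_eq_moreauEnv hsc henv
  lift L to ℝ≥0 using hL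
  have hlip : LipschitzWith L g :=
    .of_dist_le_mul (by simpa only [dist_eq_norm, Real.norm_eq_abs] using hg)
  rw [hπ, hπlam]
  exact (stmt6_general hρ hlam hD_self hD hlip hpos.ne' hfin.ne).trans (by gcongr; linarith)
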